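/- Let 0 < T ≤ ∞, let γ ∈ (0, 1/4), and let u be a smooth function on (0,T) × ℝⁿ solving the heat equation ∂ₜu = Δu. Suppose that for all 0 < a < b < T there exists C(a,b) > 0 such that for every R > 0, (∫ₐᵇ ∫_{B(0,R)} |u(t,x)|² dt dx)^{1/2} ≤ C(a,b)·exp(γR²/(b−a)), and that there exists a sequence (t_k) of times in (0,T) tending to 0 such that u(t_k) → 0 in 𝒮′(ℝⁿ), i.e. ∫_{ℝⁿ} u(t_k,x)φ(x) dx → 0 for every Schwartz function φ. Then u = 0 identically on (0,T) × ℝⁿ. -/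

import Mathlib

open MeasureTheory Metric Filter Set
open scoped Real ENNReal Topology

noncomputable section

abbrev ES (n : ℕ) := EuclideanSpace ℝ (Fin n)

/-- The Laplacian of `f`, as the sum of its second partial derivatives. -/
def heatLap (n : ℕ) (f : ES n → ℝ) (x : ES n) : ℝ :=
  ∑ i : Fin n,
    fderiv ℝ (fun y => fderiv ℝ f y (EuclideanSpace.single i 1)) x (EuclideanSpace.single i 1)

/-!
If `u` solves the heat equation then `∫ u(r, x) K(τ - r, x - y) dx`, with `K` the heat kernel, is
formally independent of `r < τ`. Inserting a cutoff equal to `1` on `B(0, R)` produces an error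
supported in `|x| ≥ R`, where `K` and its gradient are `O(exp (-κ (R - |y|)² / (τ - s)))` for
`r ∈ (s, t)` and any `κ < 1/4`. If the cutoff is supported in `B(0, lR)`, the `L²` norm of `u` there
is `O(exp (γ l² R² / (t - s)))`. Since `γ < 1/4`, one may choose `l > 1` and `κ` with
`γ l² < κ < 1/4`. Letting first `τ ↓ t` and then `R → ∞`, the error vanishes, so
`u(t, y) = ∫ u(s, x) K(t - s, x - y) dx` over every time step, however long. Taking `s` along the
sequence of times at which `u` tends to `0` gives `u = 0`.
-/

open scoped Laplacian Gradient RealInnerProductSpace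

variable {E : Type*} [NormedAddCommGroup E] [InnerProductSpace ℝ E]

section SecondDerivative

variable {F G : Type*} [NormedAddCommGroup F] [NormedSpace ℝ F] [NormedAddCommGroup G]
  [NormedSpace ℝ G] {f : F → G}

lemma contDiff_fderiv_apply (hf : ContDiff ℝ 2 f) (v : F) :
    ContDiff ℝ 1 fun y ↦ fderiv ℝ f y v :=
  (hf.fderiv_right (by norm_num)).clm_apply contDiff_const

lemma continuous_fderiv_fderiv_apply (hf : ContDiff ℝ 2 f) (v : F) :
    Continuous fun x ↦ fderiv ℝ (fun y ↦ fderiv ℝ f y v) x v :=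
  ((contDiff_fderiv_apply hf v).continuous_fderiv one_ne_zero).clm_apply continuous_const

lemma fderiv_fderiv_mul_apply_apply {f g : F → ℝ} (hf : ContDiff ℝ 2 f)
    (hg : ContDiff ℝ 2 g) (x v : F) :
    fderiv ℝ (fun y ↦ fderiv ℝ (fun z ↦ f z * g z) y v) x v =
      fderiv ℝ (fun y ↦ fderiv ℝ f y v) x v * g x + 2 * (fderiv ℝ f x v * fderiv ℝ g x v) +
        f x * fderiv ℝ (fun y ↦ fderiv ℝ g y v) x v := by
  have hfd : Differentiable ℝ f := hf.differentiable two_ne_zero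
  have hgd : Differentiable ℝ g := hg.differentiable two_ne_zero
  have hf' := (contDiff_fderiv_apply hf v).differentiable one_ne_zero x
  have hg' := (contDiff_fderiv_apply hg v).differentiable one_ne_zero x
  have hleibniz : (fun y ↦ fderiv ℝ (fun z ↦ f z * g z) y v) =
      fun y ↦ f y * fderiv ℝ g y v + g y * fderiv ℝ f y v := by
    funext y
    simp [fderiv_fun_mul (hfd y) (hgd y)]
  have hderiv : HasFDerivAt (fun y ↦ f y * fderiv ℝ g y v + g y * fderiv ℝ f y v) _ x :=
    ((hfd x).hasFDerivAt.mul hg'.hasFDerivAt).add ((hgd x).hasFDerivAt.mul hf'.hasFDerivAt)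
  rw [hleibniz, hderiv.fderiv]
  simp only [add_apply, smul_apply, smul_eq_mul]
  ring

lemma integral_mul_fderiv_fderiv_comm [FiniteDimensional ℝ F] [MeasurableSpace F]
    [BorelSpace F] {μ : Measure F} [μ.IsAddHaarMeasure] {f g : F → ℝ} (hf : ContDiff ℝ 2 f)
    (hg : ContDiff ℝ 2 g) (hgs : HasCompactSupport g) (v : F) :
    ∫ x, f x * fderiv ℝ (fun y ↦ fderiv ℝ g y v) x v ∂μ =
      ∫ x, fderiv ℝ (fun y ↦ fderiv ℝ f y v) x v * g x ∂μ := by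
  have hf' := contDiff_fderiv_apply hf v
  have hg' := contDiff_fderiv_apply hg v
  have hgs' : HasCompactSupport fun x ↦ fderiv ℝ g x v := hgs.fderiv_apply ℝ v
  have hint {φ ψ : F → ℝ} (hφ : Continuous φ) (hψ : Continuous ψ) (hψs : HasCompactSupport ψ) :
      Integrable (fun x ↦ φ x * ψ x) μ :=
    (hφ.mul hψ).integrable_of_hasCompactSupport hψs.mul_left
  rw [integral_mul_fderiv_eq_neg_fderiv_mul_of_integrable
      (hint hf'.continuous hg'.continuous hgs')
      (hint hf.continuous (continuous_fderiv_fderiv_apply hg v) (hgs'.fderiv_apply ℝ v))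
      (hint hf.continuous hg'.continuous hgs')
      (fun x _ ↦ hf.differentiable two_ne_zero x) fun x _ ↦ hg'.differentiable one_ne_zero x,
    integral_mul_fderiv_eq_neg_fderiv_mul_of_integrable
      (hint (continuous_fderiv_fderiv_apply hf v) hg.continuous hgs)
      (hint hf'.continuous hg'.continuous hgs') (hint hf'.continuous hg.continuous hgs)
      (fun x _ ↦ hf'.differentiable one_ne_zero x) fun x _ ↦ hg.differentiable two_ne_zero x,
    neg_neg]

end SecondDerivative

section Laplacian

variable [FiniteDimensional ℝ E] {f g : E → ℝ} {x : E}

lemma laplacian_eq_sum_fderiv_fderiv {ι : Type*} [Fintype ι] (b : OrthonormalBasis ι ℝ E)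
    (hf : ContDiffAt ℝ 2 f x) :
    Δ f x = ∑ i, fderiv ℝ (fun y ↦ fderiv ℝ f y (b i)) x (b i) := by
  have hf' : DifferentiableAt ℝ (fderiv ℝ f) x :=
    (hf.fderiv_right (m := 1) (by norm_num)).differentiableAt one_ne_zero
  rw [InnerProductSpace.laplacian_eq_iteratedFDeriv_orthonormalBasis f b]
  refine Finset.sum_congr rfl fun i _ ↦ ?_
  rw [iteratedFDeriv_two_apply, fderiv_clm_apply hf' (differentiableAt_const _)]
  simp

lemma continuous_laplacian (hf : ContDiff ℝ 2 f) : Continuous (Δ f) := by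
  have hsum : Δ f = fun x ↦ ∑ i, fderiv ℝ (fun y ↦ fderiv ℝ f y (stdOrthonormalBasis ℝ E i)) x
      (stdOrthonormalBasis ℝ E i) :=
    funext fun x ↦ laplacian_eq_sum_fderiv_fderiv _ hf.contDiffAt
  rw [hsum]
  exact continuous_finsetSum _ fun i _ ↦ continuous_fderiv_fderiv_apply hf _

lemma laplacian_eq_zero_of_eventuallyEq_const {c : ℝ} (hf : f =ᶠ[𝓝 x] fun _ ↦ c) :
    Δ f x = 0 := by
  rw [(InnerProductSpace.laplacian_congr_nhds hf).eq_of_nhds, InnerProductSpace.laplacian_const,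
    Pi.zero_apply]

lemma laplacian_comp_smul (hf : ContDiff ℝ 2 f) (c : ℝ) (x : E) :
    Δ (fun y ↦ f (c • y)) x = c ^ 2 * Δ f (c • x) := by
  simp only [InnerProductSpace.laplacian_eq_iteratedFDeriv_stdOrthonormalBasis,
    iteratedFDeriv_comp_const_smul (i := 2) c hf, smul_apply, smul_eq_mul,
    Finset.mul_sum]

lemma laplacian_comp_sub (f : E → ℝ) (a x : E) : Δ (fun y ↦ f (y - a)) x = Δ f (x - a) := by
  simp only [InnerProductSpace.laplacian_eq_iteratedFDeriv_stdOrthonormalBasis,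
    iteratedFDeriv_comp_sub]

lemma laplacian_mul (hf : ContDiff ℝ 2 f) (hg : ContDiff ℝ 2 g) (x : E) :
    Δ (fun y ↦ f y * g y) x = Δ f x * g x + 2 * ⟪∇ f x, ∇ g x⟫ + f x * Δ g x := by
  set b := stdOrthonormalBasis ℝ E
  have hinner : ⟪∇ f x, ∇ g x⟫ = ∑ i, fderiv ℝ f x (b i) * fderiv ℝ g x (b i) := by
    rw [← b.sum_inner_mul_inner]
    simp only [inner_gradient_left, inner_gradient_right, starRingEnd_apply, star_trivial]
  rw [laplacian_eq_sum_fderiv_fderiv b (hf.mul hg).contDiffAt,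
    laplacian_eq_sum_fderiv_fderiv b hf.contDiffAt, laplacian_eq_sum_fderiv_fderiv b hg.contDiffAt,
    hinner, Finset.sum_mul, Finset.mul_sum, Finset.mul_sum, ← Finset.sum_add_distrib,
    ← Finset.sum_add_distrib]
  exact Finset.sum_congr rfl fun i _ ↦ fderiv_fderiv_mul_apply_apply hf hg x (b i)

lemma integral_mul_laplacian_comm [MeasurableSpace E] [BorelSpace E] {μ : Measure E}
    [μ.IsAddHaarMeasure] (hf : ContDiff ℝ 2 f) (hg : ContDiff ℝ 2 g)
    (hgs : HasCompactSupport g) : ∫ x, f x * Δ g x ∂μ = ∫ x, Δ f x * g x ∂μ := by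
  set b := stdOrthonormalBasis ℝ E
  have hf'' := continuous_fderiv_fderiv_apply hf
  have hg'' := continuous_fderiv_fderiv_apply hg
  have hgs'' (v : E) : HasCompactSupport fun x ↦ fderiv ℝ (fun y ↦ fderiv ℝ g y v) x v :=
    (hgs.fderiv_apply ℝ v).fderiv_apply ℝ v
  have hint {φ ψ : E → ℝ} (hφ : Continuous φ) (hψ : Continuous ψ) (hψs : HasCompactSupport ψ) :
      Integrable (fun x ↦ φ x * ψ x) μ :=
    (hφ.mul hψ).integrable_of_hasCompactSupport hψs.mul_left
  simp only [laplacian_eq_sum_fderiv_fderiv b hf.contDiffAt,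
    laplacian_eq_sum_fderiv_fderiv b hg.contDiffAt, Finset.mul_sum, Finset.sum_mul]
  rw [integral_finsetSum _ fun i _ ↦ hint hf.continuous (hg'' _) (hgs'' _),
    integral_finsetSum _ fun i _ ↦ hint (hf'' _) hg.continuous hgs]
  exact Finset.sum_congr rfl fun i _ ↦ integral_mul_fderiv_fderiv_comm hf hg hgs (b i)

end Laplacian

lemma heatLap_eq_laplacian {n : ℕ} {f : ES n → ℝ} {x : ES n} (hf : ContDiffAt ℝ 2 f x) :
    heatLap n f x = Δ f x := by
  rw [laplacian_eq_sum_fderiv_fderiv (EuclideanSpace.basisFun (Fin n) ℝ) hf]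
  simp only [heatLap, EuclideanSpace.basisFun_apply]

section GaussianSchwartz

variable {F : Type*} [NormedAddCommGroup F] [NormedSpace ℝ F]

lemma norm_iteratedFDeriv_exp_neg (i : ℕ) (s : ℝ) :
    ‖iteratedFDeriv ℝ i (fun s : ℝ ↦ Real.exp (-s)) s‖ = Real.exp (-s) := by
  rw [norm_iteratedFDeriv_eq_norm_iteratedDeriv, iteratedDeriv_comp_neg i Real.exp s]
  simp [iteratedDeriv_eq_iterate]

lemma exists_schwartzMap_eq_exp_neg {q : F → ℝ} (hq : q.HasTemperateGrowth)
    (hdecay : ∀ k : ℕ, ∃ C, ∀ x, (1 + ‖x‖) ^ k * Real.exp (-q x) ≤ C) :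
    ∃ φ : SchwartzMap F ℝ, ∀ x, φ x = Real.exp (-q x) := by
  have hexp : ContDiff ℝ (⊤ : ℕ∞) fun s : ℝ ↦ Real.exp (-s) := by fun_prop
  refine ⟨⟨fun x ↦ Real.exp (-q x), hexp.comp hq.1, fun k m ↦ ?_⟩, fun x ↦ rfl⟩
  obtain ⟨l, C, hC, hqC⟩ := hq.norm_iteratedFDeriv_le_uniform m
  obtain ⟨B, hB⟩ := hdecay (k + l * m)
  refine ⟨m.factorial * (C + 1) ^ m * B, fun x ↦ ?_⟩
  have hbase : 1 ≤ (1 + ‖x‖) ^ l := one_le_pow₀ (by linarith [norm_nonneg x])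
  have hfaa : ‖iteratedFDeriv ℝ m (fun x ↦ Real.exp (-q x)) x‖ ≤
      m.factorial * Real.exp (-q x) * ((C + 1) * (1 + ‖x‖) ^ l) ^ m := by
    refine norm_iteratedFDeriv_comp_le (N := (⊤ : ℕ∞)) hexp hq.1 (mod_cast le_top) x
      (fun i _ ↦ (norm_iteratedFDeriv_exp_neg i _).le) fun i hi him ↦ ?_
    calc ‖iteratedFDeriv ℝ i q x‖ ≤ (C + 1) * (1 + ‖x‖) ^ l :=
          (hqC i him x).trans (by gcongr; linarith)
      _ ≤ ((C + 1) * (1 + ‖x‖) ^ l) ^ i := le_self_pow₀ (by nlinarith) (by lia)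
  calc ‖x‖ ^ k * ‖iteratedFDeriv ℝ m (fun x ↦ Real.exp (-q x)) x‖
      ≤ (1 + ‖x‖) ^ k * (m.factorial * Real.exp (-q x) * ((C + 1) * (1 + ‖x‖) ^ l) ^ m) := by
        gcongr
        linarith
    _ = m.factorial * (C + 1) ^ m * ((1 + ‖x‖) ^ (k + l * m) * Real.exp (-q x)) := by
        rw [mul_pow, pow_add, pow_mul]
        ring
    _ ≤ m.factorial * (C + 1) ^ m * B := by gcongr; exact hB x

end GaussianSchwartz

section HeatKernel

/-- The heat kernel `(4πσ)^(-d/2) exp (-‖x‖² / (4σ))` at time `σ`, centred at the origin of a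
`d`-dimensional Euclidean space; its values at `σ ≤ 0` have no meaning. -/
def heatKernel (σ : ℝ) (x : E) : ℝ :=
  (4 * π * σ) ^ (-(Module.finrank ℝ E : ℝ) / 2) * Real.exp (-(‖x‖ ^ 2 / (4 * σ)))

variable {σ : ℝ}

lemma heatKernel_nonneg (hσ : 0 < σ) (x : E) : 0 ≤ heatKernel σ x := by
  unfold heatKernel
  positivity

lemma heatKernel_le {σ₀ : ℝ} (hσ₀ : 0 < σ₀) (hσ : σ₀ ≤ σ) (x : E) :
    heatKernel σ x ≤ (4 * π * σ₀) ^ (-(Module.finrank ℝ E : ℝ) / 2) := by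
  have hσ' : 0 < σ := hσ₀.trans_le hσ
  have hexp : Real.exp (-(‖x‖ ^ 2 / (4 * σ))) ≤ 1 :=
    Real.exp_le_one_iff.2 (neg_nonpos.2 (by positivity))
  refine (mul_le_of_le_one_right (by positivity) hexp).trans ?_
  refine Real.rpow_le_rpow_of_nonpos (by positivity) (by gcongr) ?_
  exact div_nonpos_of_nonpos_of_nonneg (neg_nonpos.2 (Nat.cast_nonneg _)) zero_le_two

lemma heatKernel_le_of_one_le_norm (hσ : 0 < σ) {x : E} (hx : 1 ≤ ‖x‖) :
    heatKernel σ x ≤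
      (‖x‖ ^ 2 / σ) ^ ((Module.finrank ℝ E : ℝ) / 2) * Real.exp (-(‖x‖ ^ 2 / σ / 4)) := by
  have hbase : (4 * π * σ)⁻¹ ≤ ‖x‖ ^ 2 / σ := by
    rw [mul_inv, div_eq_mul_inv]
    gcongr
    exact (inv_le_one_of_one_le₀ (by linarith [Real.pi_gt_three])).trans (one_le_pow₀ hx)
  have hexp : ‖x‖ ^ 2 / (4 * σ) = ‖x‖ ^ 2 / σ / 4 := by
    rw [div_div, mul_comm]
  rw [heatKernel, neg_div, Real.rpow_neg (by positivity), ← Real.inv_rpow (by positivity), hexp]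
  gcongr

lemma contDiffAt_heatKernel {n : WithTop ℕ∞} (hσ : 0 < σ) (x : E) :
    ContDiffAt ℝ n (fun p : ℝ × E ↦ heatKernel p.1 p.2) (σ, x) := by
  unfold heatKernel
  have hσ' : 4 * π * σ ≠ 0 := by positivity
  have hσ'' : 4 * σ ≠ 0 := by positivity
  refine ContDiffAt.mul ?_ ?_
  · exact ContDiffAt.rpow_const_of_ne (by fun_prop) hσ'
  · exact ((contDiffAt_snd.norm_sq ℝ).div (by fun_prop) hσ'').neg.exp

lemma contDiff_heatKernel {n : WithTop ℕ∞} (σ : ℝ) : ContDiff ℝ n (heatKernel σ : E → ℝ) :=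
  contDiff_const.mul ((contDiff_id.norm_sq ℝ).div_const _).neg.exp

lemma fderiv_heatKernel_apply (σ : ℝ) (x v : E) :
    fderiv ℝ (heatKernel σ) x v = -(⟪x, v⟫ / (2 * σ)) * heatKernel σ x := by
  have hsq : HasFDerivAt (fun x : E ↦ -(‖x‖ ^ 2 / (4 * σ)))
      (-((4 * σ)⁻¹ • (2 • innerSL ℝ x))) x := by
    simpa only [div_eq_inv_mul] using
      ((hasStrictFDerivAt_norm_sq x).hasFDerivAt.const_mul _).fun_neg
  have hker : HasFDerivAt (heatKernel σ) _ x := hsq.exp.const_mul _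
  rw [hker.fderiv, heatKernel]
  simp only [smul_apply, neg_apply, innerSL_apply_apply, smul_eq_mul, nsmul_eq_mul]
  push_cast
  ring

lemma exists_schwartzMap_eq_heatKernel (hσ : 0 < σ) (y : E) :
    ∃ φ : SchwartzMap E ℝ, ∀ x, φ x = heatKernel σ (x - y) := by
  have htemp : (fun x : E ↦ ‖x - y‖ ^ 2 / (4 * σ)).HasTemperateGrowth := by
    have hsub : (fun x : E ↦ x - y).HasTemperateGrowth := by fun_prop
    simp only [div_eq_inv_mul]
    exact (Function.HasTemperateGrowth.const (4 * σ)⁻¹).mul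
      ((Function.hasTemperateGrowth_norm_sq E).comp hsub)
  have hnorm (x : E) : 1 + ‖x‖ ≤ 1 + ‖y‖ + σ + ‖x - y‖ ^ 2 / (4 * σ) := by
    have hamgm : ‖x - y‖ ≤ σ + ‖x - y‖ ^ 2 / (4 * σ) := by
      have : σ + ‖x - y‖ ^ 2 / (4 * σ) - ‖x - y‖ = (‖x - y‖ - 2 * σ) ^ 2 / (4 * σ) := by
        field_simp
        ring
      linarith [show 0 ≤ (‖x - y‖ - 2 * σ) ^ 2 / (4 * σ) by positivity]
    linarith [norm_le_norm_sub_add x y]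
  obtain ⟨φ, hφ⟩ := exists_schwartzMap_eq_exp_neg htemp fun k ↦
    ⟨k.factorial * Real.exp (1 + ‖y‖ + σ), fun x ↦ by
      have hpow := Real.pow_div_factorial_le_exp (1 + ‖x‖) (by positivity) k
      rw [div_le_iff₀' (by positivity)] at hpow
      calc (1 + ‖x‖) ^ k * Real.exp (-(‖x - y‖ ^ 2 / (4 * σ)))
          ≤ k.factorial * Real.exp (1 + ‖x‖) * Real.exp (-(‖x - y‖ ^ 2 / (4 * σ))) := by gcongr
        _ = k.factorial * Real.exp (1 + ‖x‖ - ‖x - y‖ ^ 2 / (4 * σ)) := by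
          rw [mul_assoc, ← Real.exp_add, ← sub_eq_add_neg]
        _ ≤ k.factorial * Real.exp (1 + ‖y‖ + σ) := by
          gcongr
          linarith [hnorm x]⟩
  exact ⟨(4 * π * σ) ^ (-(Module.finrank ℝ E : ℝ) / 2) • φ, fun x ↦ by
    rw [smul_apply, hφ, smul_eq_mul, heatKernel]⟩

variable [FiniteDimensional ℝ E]

lemma gradient_heatKernel (σ : ℝ) (x : E) :
    ∇ (heatKernel σ) x = -(heatKernel σ x / (2 * σ)) • x := by
  refine ext_inner_right ℝ fun v ↦ ?_
  rw [inner_gradient_left, fderiv_heatKernel_apply, real_inner_smul_left]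
  ring

lemma laplacian_heatKernel (σ : ℝ) (x : E) :
    Δ (heatKernel σ : E → ℝ) x =
      (‖x‖ ^ 2 / (4 * σ ^ 2) - Module.finrank ℝ E / (2 * σ)) * heatKernel σ x := by
  set b := stdOrthonormalBasis ℝ E
  have hdir (v : E) : fderiv ℝ (fun y ↦ fderiv ℝ (heatKernel σ) y v) x v =
      (⟪x, v⟫ ^ 2 / (4 * σ ^ 2) - ‖v‖ ^ 2 / (2 * σ)) * heatKernel σ x := by
    have hinner : HasFDerivAt (fun y : E ↦ -(⟪y, v⟫ / (2 * σ))) (-((2 * σ)⁻¹ • innerSL ℝ v)) x := by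
      simpa only [div_eq_inv_mul, real_inner_comm v, innerSL_apply_apply] using
        ((innerSL ℝ v).hasFDerivAt.const_mul (2 * σ)⁻¹).fun_neg
    have hker := ((contDiff_heatKernel (n := 1) σ).differentiable one_ne_zero x).hasFDerivAt
    have hprod : HasFDerivAt (fun y ↦ -(⟪y, v⟫ / (2 * σ)) * heatKernel σ y) _ x :=
      hinner.mul hker
    simp only [fderiv_heatKernel_apply]
    rw [hprod.fderiv]
    simp only [add_apply, smul_apply, neg_apply, innerSL_apply_apply, smul_eq_mul,
      fderiv_heatKernel_apply, real_inner_self_eq_norm_sq]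
    ring
  rw [laplacian_eq_sum_fderiv_fderiv b (contDiff_heatKernel σ).contDiffAt]
  simp only [hdir, b.norm_eq_one]
  rw [← Finset.sum_mul, Finset.sum_sub_distrib, ← Finset.sum_div, b.sum_sq_inner_left,
    Finset.sum_const, Finset.card_univ, Fintype.card_fin, nsmul_eq_mul]
  ring

lemma hasDerivAt_heatKernel (hσ : 0 < σ) (x : E) :
    HasDerivAt (fun s ↦ heatKernel s x) (Δ (heatKernel σ : E → ℝ) x) σ := by
  have hpow : HasDerivAt (fun s : ℝ ↦ (4 * π * s) ^ (-(Module.finrank ℝ E : ℝ) / 2))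
      (4 * π * (-(Module.finrank ℝ E : ℝ) / 2) *
        (4 * π * σ) ^ (-(Module.finrank ℝ E : ℝ) / 2 - 1)) σ :=
    (hasDerivAt_const_mul (4 * π)).rpow_const (Or.inl (by positivity))
  have hexponent : HasDerivAt (fun s : ℝ ↦ -(‖x‖ ^ 2 / (4 * s))) (‖x‖ ^ 2 / (4 * σ ^ 2)) σ := by
    have hinv := ((hasDerivAt_inv hσ.ne').const_mul (‖x‖ ^ 2 / 4)).fun_neg
    simp only [← div_eq_mul_inv, div_div] at hinv
    refine hinv.congr_deriv ?_
    field_simp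
  refine (hpow.mul hexponent.exp).congr_deriv ?_
  rw [laplacian_heatKernel, heatKernel, Real.rpow_sub_one (by positivity)]
  field_simp
  ring

variable [MeasurableSpace E] [BorelSpace E] {g : E → ℝ}

lemma tendsto_integral_mul_heatKernel {y : E} (hg : Integrable g) (hgy : ContinuousAt g y) :
    Tendsto (fun σ ↦ ∫ x, g x * heatKernel σ (x - y)) (𝓝[>] 0) (𝓝 (g y)) := by
  have hparam : Tendsto (fun σ : ℝ ↦ (4 * π ^ 2 * σ)⁻¹) (𝓝[>] 0) atTop := by
    have := tendsto_inv_nhdsGT_zero.const_mul_atTop (r := (4 * π ^ 2)⁻¹) (by positivity)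
    simpa only [mul_inv] using this
  have hgauss := (Real.tendsto_integral_gaussian_smul' hg.ofReal
    (Complex.continuous_ofReal.continuousAt.comp hgy)).comp hparam
  refine (Complex.continuous_re.tendsto _).comp hgauss |>.congr' ?_
  filter_upwards [self_mem_nhdsWithin] with σ (hσ : 0 < σ)
  simp only [Function.comp_apply]
  rw [← Complex.ofReal_re (∫ x, g x * heatKernel σ (x - y)), ← integral_complex_ofReal]
  congr 2 with x
  have hbase : (π * ((4 * π ^ 2 * σ)⁻¹ : ℝ) : ℂ) ^ (Module.finrank ℝ E / 2 : ℂ) =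
      ((4 * π * σ) ^ (-(Module.finrank ℝ E : ℝ) / 2) : ℝ) := by
    have : π * (4 * π ^ 2 * σ)⁻¹ = (4 * π * σ)⁻¹ := by field_simp
    rw [← Complex.ofReal_mul, this, neg_div, Real.rpow_neg (by positivity),
      ← Real.inv_rpow (by positivity), Complex.ofReal_cpow (by positivity)]
    norm_num
  have hexp : Complex.exp (-π ^ 2 * ((4 * π ^ 2 * σ)⁻¹ : ℝ) * ‖y - x‖ ^ 2) =
      Real.exp (-(‖x - y‖ ^ 2 / (4 * σ))) := by
    rw [norm_sub_rev, Complex.ofReal_exp]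
    congr 1
    push_cast
    field_simp
  rw [hbase, hexp, heatKernel]
  push_cast
  rw [smul_eq_mul]
  ring

lemma continuousAt_integral_mul_heatKernel (hσ : 0 < σ) (hg : Integrable g) (y : E) :
    ContinuousAt (fun s ↦ ∫ x, g x * heatKernel s (x - y)) σ := by
  have hpos : ∀ᶠ s in 𝓝 σ, σ / 2 < s := eventually_gt_nhds (by linarith)
  refine tendsto_integral_filter_of_dominated_convergence
    (fun x ↦ ‖g x‖ * (4 * π * (σ / 2)) ^ (-(Module.finrank ℝ E : ℝ) / 2)) ?_ ?_
    (hg.norm.mul_const _) ?_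
  · refine Eventually.of_forall fun s ↦ hg.aestronglyMeasurable.mul ?_
    exact ((contDiff_heatKernel (n := 0) s).continuous.comp
      (continuous_sub_right y)).aestronglyMeasurable
  · filter_upwards [hpos] with s hs
    refine Eventually.of_forall fun x ↦ ?_
    rw [norm_mul, Real.norm_of_nonneg (heatKernel_nonneg (by linarith) _)]
    gcongr
    exact heatKernel_le (by positivity) hs.le _
  · exact Eventually.of_forall fun x ↦
      ((hasDerivAt_heatKernel hσ (x - y)).continuousAt.tendsto).const_mul (g x)

end HeatKernel

section Cutoff

variable [FiniteDimensional ℝ E] {R L D : ℝ} {χ : E → ℝ}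

/-- `χ` is a `C²` cutoff function between the closed ball of radius `R` and the ball of radius `L`
around the origin, with gradient and Laplacian bounded by `D`. -/
structure IsCutoff (R L D : ℝ) (χ : E → ℝ) : Prop where
  contDiff : ContDiff ℝ 2 χ
  eqOn_one : EqOn χ 1 (closedBall 0 R)
  tsupport_subset : tsupport χ ⊆ ball 0 L
  abs_le_one : ∀ x, |χ x| ≤ 1
  norm_fderiv_le : ∀ x, ‖fderiv ℝ χ x‖ ≤ D
  abs_laplacian_le : ∀ x, |Δ χ x| ≤ D

lemma IsCutoff.hasCompactSupport (hχ : IsCutoff R L D χ) : HasCompactSupport χ :=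
  (isCompact_closedBall 0 L).of_isClosed_subset (isClosed_tsupport χ)
    (hχ.tsupport_subset.trans ball_subset_closedBall)

lemma IsCutoff.eventuallyEq_one (hχ : IsCutoff R L D χ) {x : E} (hx : ‖x‖ < R) :
    χ =ᶠ[𝓝 x] fun _ ↦ 1 :=
  (hχ.eqOn_one.mono ball_subset_closedBall).eventuallyEq_of_mem
    (isOpen_ball.mem_nhds (mem_ball_zero_iff.2 hx))

lemma hasCompactSupport_laplacian {f : E → ℝ} (hf : HasCompactSupport f) :
    HasCompactSupport (Δ f) :=
  HasCompactSupport.intro hf fun _ hx ↦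
    laplacian_eq_zero_of_eventuallyEq_const (notMem_tsupport_iff_eventuallyEq.1 hx)

lemma exists_isCutoff {l : ℝ} (hl : 1 < l) :
    ∃ D, ∀ R, 1 ≤ R → ∃ χ : E → ℝ, IsCutoff R (l * R) D χ := by
  let f : ContDiffBump (0 : E) := ⟨1, (1 + l) / 2, one_pos, by linarith⟩
  have hf : ContDiff ℝ 2 f := f.contDiff
  obtain ⟨D₁, hD₁⟩ := (hf.continuous_fderiv two_ne_zero).bounded_above_of_compact_support
    (f.hasCompactSupport.fderiv ℝ)
  obtain ⟨D₂, hD₂⟩ := (continuous_laplacian hf).bounded_above_of_compact_support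
    (hasCompactSupport_laplacian f.hasCompactSupport)
  refine ⟨max D₁ D₂, fun R hR ↦ ⟨fun x ↦ f (R⁻¹ • x), ?_⟩⟩
  have hR₀ : 0 < R := by linarith
  have hR_inv : R⁻¹ ≤ 1 := inv_le_one_of_one_le₀ hR
  have hnorm (x : E) : ‖R⁻¹ • x‖ = ‖x‖ / R := by
    rw [norm_smul, Real.norm_of_nonneg (by positivity), inv_mul_eq_div]
  refine ⟨hf.comp (contDiff_const_smul _), fun x hx ↦ ?_, ?_, fun x ↦ ?_, fun x ↦ ?_, fun x ↦ ?_⟩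
  · refine f.one_of_mem_closedBall (mem_closedBall_zero_iff.2 ?_)
    rw [hnorm]
    exact div_le_one_of_le₀ (mem_closedBall_zero_iff.1 hx) hR₀.le
  · refine (tsupport_comp_subset_preimage f (continuous_const_smul R⁻¹)).trans fun x hx ↦ ?_
    rw [mem_preimage, f.tsupport_eq, mem_closedBall_zero_iff, hnorm, div_le_iff₀ hR₀] at hx
    rw [mem_ball_zero_iff]
    calc ‖x‖ ≤ (1 + l) / 2 * R := hx
      _ < l * R := by gcongr; linarith
  · rw [abs_of_nonneg f.nonneg]
    exact f.le_one
  · rw [fderiv_comp_smul, norm_smul, Real.norm_of_nonneg (by positivity)]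
    exact (mul_le_of_le_one_left (norm_nonneg _) hR_inv).trans ((hD₁ _).trans (le_max_left _ _))
  · rw [laplacian_comp_smul hf, abs_mul, abs_of_nonneg (by positivity)]
    exact (mul_le_of_le_one_left (abs_nonneg _) (pow_le_one₀ (by positivity) hR_inv)).trans
      ((hD₂ _).trans (le_max_right _ _))

/-- The defect `(∂ₛ + Δ) (heatKernel (τ - s) (x - y) * χ x)` at `σ = τ - s`: what the cutoff `χ`
adds to the backward heat equation satisfied by the heat kernel. -/
def cutoffError (χ : E → ℝ) (y : E) (σ : ℝ) (x : E) : ℝ :=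
  heatKernel σ (x - y) * (Δ χ x - fderiv ℝ χ x (x - y) / σ)

lemma laplacian_heatKernel_mul (hχ : ContDiff ℝ 2 χ) (y : E) (σ : ℝ) (x : E) :
    Δ (fun z ↦ heatKernel σ (z - y) * χ z) x =
      Δ (heatKernel σ : E → ℝ) (x - y) * χ x + cutoffError χ y σ x := by
  have hgrad : ∇ (fun z ↦ heatKernel σ (z - y)) x = ∇ (heatKernel σ : E → ℝ) (x - y) := by
    rw [gradient, fderiv_comp_sub, gradient]
  have hker : ContDiff ℝ 2 fun z ↦ heatKernel σ (z - y) :=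
    (contDiff_heatKernel σ).comp (contDiff_id.sub contDiff_const)
  rw [laplacian_mul hker hχ, laplacian_comp_sub, hgrad, gradient_heatKernel, real_inner_smul_left,
    inner_gradient_right, cutoffError]
  simp only [starRingEnd_apply, star_trivial]
  ring

lemma hasDerivAt_heatKernel_mul (hχ : ContDiff ℝ 2 χ) (y : E) {r τ : ℝ} (hr : r < τ) (x : E) :
    HasDerivAt (fun s ↦ heatKernel (τ - s) (x - y) * χ x)
      (cutoffError χ y (τ - r) x - Δ (fun z ↦ heatKernel (τ - r) (z - y) * χ z) x) r := by
  rw [laplacian_heatKernel_mul hχ]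
  have hker := (hasDerivAt_heatKernel (sub_pos.2 hr) (x - y)).comp r
    ((hasDerivAt_id r).const_sub τ)
  exact (hker.mul_const (χ x)).congr_deriv (by ring)

lemma exists_rpow_mul_one_add_mul_exp_le {p c κ : ℝ} (hp : 0 ≤ p) (hκ : κ < c) :
    ∃ M, ∀ q, 0 ≤ q → q ^ p * (1 + q) * Real.exp (-(c * q)) ≤ M * Real.exp (-(κ * q)) := by
  set N := ⌈p⌉₊ + 1
  have : 0 < c - κ := sub_pos.2 hκ
  refine ⟨N.factorial / (c - κ) ^ N * Real.exp (c - κ), fun q hq ↦ ?_⟩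
  have hpow : q ^ p * (1 + q) ≤ (1 + q) ^ N := by
    have hqp : q ^ p ≤ (1 + q) ^ ⌈p⌉₊ := by
      rw [← Real.rpow_natCast]
      calc q ^ p ≤ (1 + q) ^ p := by gcongr; linarith
        _ ≤ (1 + q) ^ (⌈p⌉₊ : ℝ) :=
          Real.rpow_le_rpow_of_exponent_le (by linarith) (Nat.le_ceil p)
    rw [pow_succ]
    gcongr
  have hexp := Real.pow_div_factorial_le_exp ((c - κ) * (1 + q)) (by positivity) N
  rw [mul_pow, div_le_iff₀ (by positivity), ← le_div_iff₀' (by positivity)] at hexp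
  calc q ^ p * (1 + q) * Real.exp (-(c * q))
      ≤ Real.exp ((c - κ) * (1 + q)) * N.factorial / (c - κ) ^ N * Real.exp (-(c * q)) := by
        gcongr
        exact hpow.trans hexp
    _ = N.factorial / (c - κ) ^ N * (Real.exp ((c - κ) * (1 + q)) * Real.exp (-(c * q))) := by ring
    _ = N.factorial / (c - κ) ^ N * Real.exp (c - κ) * Real.exp (-(κ * q)) := by
        rw [mul_assoc, ← Real.exp_add, ← Real.exp_add]
        ring_nf

lemma cutoffError_eq_zero_of_eventuallyEq_const {x : E} {c : ℝ} (hχ : χ =ᶠ[𝓝 x] fun _ ↦ c)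
    (y : E) (σ : ℝ) : cutoffError χ y σ x = 0 := by
  simp [cutoffError, laplacian_eq_zero_of_eventuallyEq_const hχ, hχ.fderiv_eq]

lemma IsCutoff.cutoffError_eq_zero_of_notMem_ball (hχ : IsCutoff R L D χ) {x : E}
    (hx : x ∉ ball 0 L) (y : E) (σ : ℝ) : cutoffError χ y σ x = 0 :=
  cutoffError_eq_zero_of_eventuallyEq_const
    (notMem_tsupport_iff_eventuallyEq.1 fun hx' ↦ hx (hχ.tsupport_subset hx')) y σ

lemma IsCutoff.abs_cutoffError_le (hχ : IsCutoff R L D χ) {x y : E} (hxy : 1 ≤ ‖x - y‖) {σ : ℝ}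
    (hσ : 0 < σ) :
    |cutoffError χ y σ x| ≤ D * ((‖x - y‖ ^ 2 / σ) ^ ((Module.finrank ℝ E : ℝ) / 2) *
      (1 + ‖x - y‖ ^ 2 / σ) * Real.exp (-(1 / 4 * (‖x - y‖ ^ 2 / σ)))) := by
  have hD : 0 ≤ D := (norm_nonneg _).trans (hχ.norm_fderiv_le 0)
  have hfderiv : |fderiv ℝ χ x (x - y) / σ| ≤ D * (‖x - y‖ ^ 2 / σ) := by
    rw [abs_div, abs_of_pos hσ, ← mul_div_assoc]
    gcongr
    calc |fderiv ℝ χ x (x - y)| ≤ ‖fderiv ℝ χ x‖ * ‖x - y‖ := (fderiv ℝ χ x).le_opNorm _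
      _ ≤ D * ‖x - y‖ ^ 2 := by
        gcongr
        · exact hχ.norm_fderiv_le x
        · exact le_self_pow₀ hxy two_ne_zero
  calc |cutoffError χ y σ x|
      = heatKernel σ (x - y) * |Δ χ x - fderiv ℝ χ x (x - y) / σ| := by
        rw [cutoffError, abs_mul, abs_of_nonneg (heatKernel_nonneg hσ _)]
    _ ≤ (‖x - y‖ ^ 2 / σ) ^ ((Module.finrank ℝ E : ℝ) / 2) *
          Real.exp (-(‖x - y‖ ^ 2 / σ / 4)) * (D + D * (‖x - y‖ ^ 2 / σ)) := by
        gcongr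
        · exact heatKernel_le_of_one_le_norm hσ hxy
        · exact (abs_sub _ _).trans (add_le_add (hχ.abs_laplacian_le x) hfderiv)
    _ = _ := by ring_nf

lemma exists_abs_cutoffError_le {κ : ℝ} (hκ₀ : 0 ≤ κ) (hκ : κ < 1 / 4) :
    ∃ M, ∀ {R L D : ℝ} {χ : E → ℝ} {y : E} {σ σ₁ : ℝ} (x : E), IsCutoff R L D χ → ‖y‖ + 1 ≤ R →
      0 < σ → σ ≤ σ₁ → |cutoffError χ y σ x| ≤ M * D * Real.exp (-(κ * ((R - ‖y‖) ^ 2 / σ₁))) := by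
  obtain ⟨M, hM⟩ := exists_rpow_mul_one_add_mul_exp_le
    (p := (Module.finrank ℝ E : ℝ) / 2) (by positivity) hκ
  have hM₀ : 0 ≤ M := by simpa using (by positivity : (0 : ℝ) ≤ _).trans (hM 0 le_rfl)
  refine ⟨M, fun {R L D χ y σ σ₁} x hχ hyR hσ hσ₁ ↦ ?_⟩
  have hD : 0 ≤ D := (norm_nonneg _).trans (hχ.norm_fderiv_le 0)
  rcases lt_or_ge ‖x‖ R with hx | hx
  · rw [cutoffError_eq_zero_of_eventuallyEq_const (hχ.eventuallyEq_one hx), abs_zero]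
    positivity
  · have hdist : R - ‖y‖ ≤ ‖x - y‖ := by linarith [norm_sub_norm_le x y]
    calc |cutoffError χ y σ x|
        ≤ D * _ := hχ.abs_cutoffError_le (by linarith) hσ
      _ ≤ D * (M * Real.exp (-(κ * (‖x - y‖ ^ 2 / σ)))) :=
        mul_le_mul_of_nonneg_left (hM _ (by positivity)) hD
      _ ≤ D * (M * Real.exp (-(κ * ((R - ‖y‖) ^ 2 / σ₁)))) := by
        gcongr
        linarith
      _ = _ := by ring

end Cutoff

section IntegralDeriv

variable {F : Type*} {Φ : ℝ → F → ℝ} {I : Set ℝ}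

lemma deriv_left_eq_zero (hI : IsOpen I) {x : F} (hΦ : ∀ r ∈ I, Φ r x = 0) {r : ℝ} (hr : r ∈ I) :
    deriv (fun r ↦ Φ r x) r = 0 := by
  have hzero : (fun r ↦ Φ r x) =ᶠ[𝓝 r] fun _ ↦ 0 := by
    filter_upwards [hI.mem_nhds hr] with r' hr' using hΦ r' hr'
  rw [hzero.deriv_eq, deriv_const]

variable [NormedAddCommGroup F] [NormedSpace ℝ F]

lemma contDiff_slice {n : WithTop ℕ∞} (hΦ : ContDiffOn ℝ n (fun p : ℝ × F ↦ Φ p.1 p.2) (I ×ˢ univ))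
    {r : ℝ} (hr : r ∈ I) : ContDiff ℝ n (Φ r) :=
  contDiffOn_univ.1 <| hΦ.comp (contDiff_prodMk_right r).contDiffOn fun _ _ ↦ ⟨hr, mem_univ _⟩

lemma continuousOn_deriv_left (hI : IsOpen I)
    (hΦ : ContDiffOn ℝ 1 (fun p : ℝ × F ↦ Φ p.1 p.2) (I ×ˢ univ)) :
    ContinuousOn (fun p : ℝ × F ↦ deriv (fun r ↦ Φ r p.2) p.1) (I ×ˢ univ) := by
  have hopen : IsOpen (I ×ˢ (univ : Set F)) := hI.prod isOpen_univ
  refine ((hΦ.continuousOn_fderiv_of_isOpen hopen le_rfl).clm_apply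
    (continuousOn_const (c := ((1 : ℝ), (0 : F))))).congr fun p hp ↦ ?_
  have hdiff : HasFDerivAt (fun p : ℝ × F ↦ Φ p.1 p.2) _ (p.1, p.2) :=
    ((hΦ.differentiableOn one_ne_zero).differentiableAt (hopen.mem_nhds hp)).hasFDerivAt
  exact (hdiff.comp_hasDerivAt p.1 ((hasDerivAt_id p.1).prodMk (hasDerivAt_const p.1 p.2))).deriv

lemma differentiableAt_left (hI : IsOpen I)
    (hΦ : ContDiffOn ℝ 1 (fun p : ℝ × F ↦ Φ p.1 p.2) (I ×ˢ univ)) {r : ℝ} (hr : r ∈ I) (x : F) :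
    DifferentiableAt ℝ (fun r ↦ Φ r x) r := by
  have hdiff : DifferentiableAt ℝ (fun p : ℝ × F ↦ Φ p.1 p.2) (r, x) :=
    (hΦ.differentiableOn one_ne_zero).differentiableAt
      ((hI.prod isOpen_univ).mem_nhds ⟨hr, mem_univ x⟩)
  exact hdiff.comp (f := fun s : ℝ ↦ (s, x)) r (by fun_prop)

lemma integral_sub_integral_eq_integral_deriv [MeasurableSpace F] [BorelSpace F]
    [SecondCountableTopology F] {μ : Measure F} [IsFiniteMeasureOnCompacts μ] [SFinite μ]
    (hI : IsOpen I) (hΦ : ContDiffOn ℝ 1 (fun p : ℝ × F ↦ Φ p.1 p.2) (I ×ˢ univ))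
    {K : Set F} (hK : IsCompact K) (hΦK : ∀ r ∈ I, ∀ x ∉ K, Φ r x = 0)
    {s t : ℝ} (hst : s ≤ t) (hsub : Icc s t ⊆ I) :
    ∫ x, Φ t x ∂μ - ∫ x, Φ s x ∂μ = ∫ r in Ioo s t, ∫ x, deriv (fun r ↦ Φ r x) r ∂μ := by
  have hs : s ∈ I := hsub (left_mem_Icc.2 hst)
  have ht : t ∈ I := hsub (right_mem_Icc.2 hst)
  have hderiv := continuousOn_deriv_left hI hΦ
  have hint (r : ℝ) (hr : r ∈ I) : Integrable (Φ r) μ :=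
    (contDiff_slice hΦ hr).continuous.integrable_of_hasCompactSupport
      (HasCompactSupport.intro hK fun x hx ↦ hΦK r hr x hx)
  have hftc (x : F) : Φ t x - Φ s x = ∫ r in Ioc s t, deriv (fun r ↦ Φ r x) r := by
    rw [← intervalIntegral.integral_of_le hst]
    have hcont : ContinuousOn (fun r ↦ deriv (fun r ↦ Φ r x) r) (Icc s t) :=
      hderiv.comp (f := fun r : ℝ ↦ (r, x)) (by fun_prop) fun r hr ↦ ⟨hsub hr, mem_univ x⟩
    exact (intervalIntegral.integral_deriv_eq_sub (f := fun r ↦ Φ r x)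
      (fun r hr ↦ differentiableAt_left hI hΦ (hsub (uIcc_of_le hst ▸ hr)) x)
      (hcont.intervalIntegrable_of_Icc hst)).symm
  have hswap : Integrable (Function.uncurry fun x r ↦ deriv (fun r ↦ Φ r x) r)
      ((μ.restrict K).prod (volume.restrict (Ioc s t))) := by
    rw [Measure.prod_restrict]
    refine IntegrableOn.mono_set ?_ (prod_mono subset_rfl Ioc_subset_Icc_self)
    refine ContinuousOn.integrableOn_compact (hK.prod isCompact_Icc) ?_
    exact hderiv.comp continuous_swap.continuousOn fun p hp ↦ ⟨hsub hp.2, mem_univ _⟩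
  rw [← integral_sub (hint t ht) (hint s hs), integral_Ioc_eq_integral_Ioo.symm]
  calc ∫ x, (Φ t x - Φ s x) ∂μ = ∫ x in K, (Φ t x - Φ s x) ∂μ :=
        (setIntegral_eq_integral_of_forall_compl_eq_zero fun x hx ↦ by
          rw [hΦK t ht x hx, hΦK s hs x hx, sub_zero]).symm
    _ = ∫ x in K, (∫ r in Ioc s t, deriv (fun r ↦ Φ r x) r) ∂μ := by simp only [hftc]
    _ = ∫ r in Ioc s t, ∫ x in K, deriv (fun r ↦ Φ r x) r ∂μ := integral_integral_swap hswap
    _ = ∫ r in Ioc s t, ∫ x, deriv (fun r ↦ Φ r x) r ∂μ :=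
        setIntegral_congr_fun measurableSet_Ioc fun r hr ↦
          setIntegral_eq_integral_of_forall_compl_eq_zero fun x hx ↦
            deriv_left_eq_zero hI (fun r hr ↦ hΦK r hr x hx) (hsub (Ioc_subset_Icc_self hr))

end IntegralDeriv

section HeatSolution

variable [FiniteDimensional ℝ E] {I J : Set ℝ} {u : ℝ → E → ℝ}

/-- `u` is a classical solution, of class `C²`, of the heat equation `∂ₜu = Δu` on `I × E`. -/
structure IsHeatSolutionOn (I : Set ℝ) (u : ℝ → E → ℝ) : Prop where
  contDiffOn : ContDiffOn ℝ 2 (fun p : ℝ × E ↦ u p.1 p.2) (I ×ˢ univ)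
  hasDerivAt : ∀ r ∈ I, ∀ x, HasDerivAt (fun s ↦ u s x) (Δ (u r) x) r

namespace IsHeatSolutionOn

lemma mono (hu : IsHeatSolutionOn I u) (hJ : J ⊆ I) : IsHeatSolutionOn J u :=
  ⟨hu.contDiffOn.mono (prod_mono hJ subset_rfl), fun r hr ↦ hu.hasDerivAt r (hJ hr)⟩

lemma contDiff (hu : IsHeatSolutionOn I u) {r : ℝ} (hr : r ∈ I) : ContDiff ℝ 2 (u r) :=
  contDiff_slice hu.contDiffOn hr

variable [MeasurableSpace E] [BorelSpace E]

lemma integral_mul_sub_integral_mul (hu : IsHeatSolutionOn I u) (hI : IsOpen I) {ψ : ℝ → E → ℝ}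
    (hψ : ContDiffOn ℝ 2 (fun p : ℝ × E ↦ ψ p.1 p.2) (I ×ˢ univ)) {K : Set E} (hK : IsCompact K)
    (hψK : ∀ r ∈ I, ∀ x ∉ K, ψ r x = 0) {s t : ℝ} (hst : s ≤ t) (hsub : Icc s t ⊆ I) :
    (∫ x, u t x * ψ t x) - ∫ x, u s x * ψ s x =
      ∫ r in Ioo s t, ∫ x, u r x * (deriv (fun r ↦ ψ r x) r + Δ (ψ r) x) := by
  rw [integral_sub_integral_eq_integral_deriv (μ := volume) (Φ := fun r x ↦ u r x * ψ r x) hI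
    ((hu.contDiffOn.mul hψ).of_le one_le_two) hK
    (fun r hr x hx ↦ by rw [hψK r hr x hx, mul_zero]) hst hsub]
  refine setIntegral_congr_fun measurableSet_Ioo fun r hr ↦ ?_
  have hrI : r ∈ I := hsub (Ioo_subset_Icc_self hr)
  have hψ₁ := hψ.of_le one_le_two
  have hψr : ContDiff ℝ 2 (ψ r) := contDiff_slice hψ hrI
  have hψrK : HasCompactSupport (ψ r) := HasCompactSupport.intro hK fun x hx ↦ hψK r hrI x hx
  have hderiv_cont : Continuous fun x ↦ deriv (fun r ↦ ψ r x) r :=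
    continuousOn_univ.1 <| (continuousOn_deriv_left hI hψ₁).comp
      (Continuous.prodMk_right r).continuousOn fun x _ ↦ ⟨hrI, mem_univ x⟩
  have hderiv_supp : HasCompactSupport fun x ↦ deriv (fun r ↦ ψ r x) r :=
    HasCompactSupport.intro hK fun x hx ↦ deriv_left_eq_zero hI (fun r hr ↦ hψK r hr x hx) hrI
  have hint {f g : E → ℝ} (hf : Continuous f) (hg : Continuous g) (hgs : HasCompactSupport g) :
      Integrable fun x ↦ f x * g x :=
    (hf.mul hg).integrable_of_hasCompactSupport hgs.mul_left
  have hleibniz (x : E) : deriv (fun r ↦ u r x * ψ r x) r =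
      Δ (u r) x * ψ r x + u r x * deriv (fun r ↦ ψ r x) r :=
    ((hu.hasDerivAt r hrI x).fun_mul (differentiableAt_left hI hψ₁ hrI x).hasDerivAt).deriv
  have hur : Continuous (u r) := (hu.contDiff hrI).continuous
  have hu_deriv := hint hur hderiv_cont hderiv_supp
  simp only [hleibniz, mul_add]
  rw [integral_add (hint (continuous_laplacian (hu.contDiff hrI)) hψr.continuous hψrK) hu_deriv,
    integral_add hu_deriv
      (hint hur (continuous_laplacian hψr) (hasCompactSupport_laplacian hψrK)),
    integral_mul_laplacian_comm (hu.contDiff hrI) hψr hψrK, add_comm]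

lemma integral_mul_heatKernel_mul_sub (hu : IsHeatSolutionOn I u) (hI : IsOpen I) {χ : E → ℝ}
    (hχ : ContDiff ℝ 2 χ) (hχs : HasCompactSupport χ) (y : E) {s t τ : ℝ} (hst : s ≤ t)
    (htτ : t < τ) (hsub : Icc s t ⊆ I) :
    (∫ x, u t x * (heatKernel (τ - t) (x - y) * χ x)) -
        ∫ x, u s x * (heatKernel (τ - s) (x - y) * χ x) =
      ∫ r in Ioo s t, ∫ x, u r x * cutoffError χ y (τ - r) x := by
  have hψ : ContDiffOn ℝ 2 (fun p : ℝ × E ↦ heatKernel (τ - p.1) (p.2 - y) * χ p.2)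
      ((I ∩ Iio τ) ×ˢ univ) := by
    rintro ⟨r, x⟩ ⟨⟨-, hr : r < τ⟩, -⟩
    refine ContDiffAt.contDiffWithinAt (ContDiffAt.mul ?_ (hχ.contDiffAt.comp _ contDiffAt_snd))
    exact (contDiffAt_heatKernel (sub_pos.2 hr) (x - y)).comp (r, x)
      (f := fun p : ℝ × E ↦ (τ - p.1, p.2 - y)) (by fun_prop)
  rw [(hu.mono inter_subset_left).integral_mul_sub_integral_mul
    (ψ := fun r x ↦ heatKernel (τ - r) (x - y) * χ x) (hI.inter isOpen_Iio) hψ hχs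
    (fun r _ x hx ↦ by rw [image_eq_zero_of_notMem_tsupport hx, mul_zero]) hst
    fun r hr ↦ ⟨hsub hr, hr.2.trans_lt htτ⟩]
  refine setIntegral_congr_fun measurableSet_Ioo fun r hr ↦ ?_
  have hr : r < τ := hr.2.trans htτ
  simp only [(hasDerivAt_heatKernel_mul hχ y hr _).deriv, sub_add_cancel]

end IsHeatSolutionOn

end HeatSolution

section CauchySchwarz

variable {X Y : Type*} [MeasurableSpace X] [MeasurableSpace Y] {μ : Measure X} {ν : Measure Y}

lemma integral_abs_le_sqrt_integral_sq_mul_sqrt [IsFiniteMeasure μ] {f : X → ℝ}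
    (hf : MemLp f 2 μ) : ∫ x, |f x| ∂μ ≤ √(∫ x, f x ^ 2 ∂μ) * √(μ.real univ) := by
  have hf' : MemLp f (ENNReal.ofReal 2) μ := by simpa using hf
  simpa [Real.sqrt_eq_rpow] using
    integral_mul_norm_le_Lp_mul_Lq Real.HolderConjugate.two_two hf' (memLp_const (1 : ℝ))

lemma abs_integral_integral_mul_le [IsFiniteMeasure μ] [IsFiniteMeasure ν] {f g : X → Y → ℝ}
    {B : ℝ} (hf : MemLp (Function.uncurry f) 2 (μ.prod ν))
    (hg : ∀ᵐ x ∂μ, ∀ y, |g x y| ≤ B) (hB : 0 ≤ B) :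
    |∫ x, ∫ y, f x y * g x y ∂ν ∂μ| ≤
      B * (√(∫ x, ∫ y, f x y ^ 2 ∂ν ∂μ) * √(μ.real univ * ν.real univ)) := by
  have hfB : Integrable (fun p : X × Y ↦ B * |f p.1 p.2|) (μ.prod ν) :=
    (hf.integrable one_le_two).abs.const_mul B
  calc |∫ x, ∫ y, f x y * g x y ∂ν ∂μ| ≤ ∫ x, ∫ y, B * |f x y| ∂ν ∂μ := by
        rw [← Real.norm_eq_abs]
        refine norm_integral_le_of_norm_le hfB.integral_prod_left ?_
        filter_upwards [hg, hfB.prod_right_ae] with x hgx hfx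
        refine norm_integral_le_of_norm_le hfx (.of_forall fun y ↦ ?_)
        rw [Real.norm_eq_abs, abs_mul, mul_comm]
        exact mul_le_mul_of_nonneg_right (hgx y) (abs_nonneg _)
    _ = B * ∫ p, |Function.uncurry f p| ∂μ.prod ν := by
        rw [← integral_prod _ hfB, integral_const_mul]; rfl
    _ ≤ B * (√(∫ p, Function.uncurry f p ^ 2 ∂μ.prod ν) * √((μ.prod ν).real univ)) := by
        gcongr; exact integral_abs_le_sqrt_integral_sq_mul_sqrt hf
    _ = B * (√(∫ x, ∫ y, f x y ^ 2 ∂ν ∂μ) * √(μ.real univ * ν.real univ)) := by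
        rw [integral_prod _ hf.integrable_sq, ← univ_prod_univ, measureReal_prod_prod]; rfl

end CauchySchwarz

section Representation

variable [FiniteDimensional ℝ E] [MeasurableSpace E] [BorelSpace E] {I : Set ℝ} {u : ℝ → E → ℝ}

namespace IsHeatSolutionOn

lemma abs_integral_mul_heatKernel_mul_sub_le (hu : IsHeatSolutionOn I u) (hI : IsOpen I)
    {R L D B : ℝ} {χ : E → ℝ} (hχ : IsCutoff R L D χ) (y : E) {s t τ : ℝ} (hst : s < t)
    (htτ : t < τ) (hsub : Icc s t ⊆ I)
    (hB : ∀ r ∈ Ioo s t, ∀ x, |cutoffError χ y (τ - r) x| ≤ B) :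
    |(∫ x, u t x * (heatKernel (τ - t) (x - y) * χ x)) -
        ∫ x, u s x * (heatKernel (τ - s) (x - y) * χ x)| ≤
      B * (√(∫ r in Ioo s t, ∫ x in ball 0 L, u r x ^ 2) *
        √((t - s) * volume.real (ball (0 : E) L))) := by
  obtain ⟨r₀, hr₀⟩ := nonempty_Ioo.2 hst
  have hB₀ : 0 ≤ B := (abs_nonneg _).trans (hB r₀ hr₀ 0)
  have hball (r : ℝ) : ∫ x, u r x * cutoffError χ y (τ - r) x =
      ∫ x in ball 0 L, u r x * cutoffError χ y (τ - r) x := by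
    refine (setIntegral_eq_integral_of_forall_compl_eq_zero fun x hx ↦ ?_).symm
    rw [hχ.cutoffError_eq_zero_of_notMem_ball hx, mul_zero]
  have hmem : MemLp (Function.uncurry u) 2
      ((volume.restrict (Ioo s t)).prod (volume.restrict (ball (0 : E) L))) := by
    have hK := (isCompact_Icc (a := s) (b := t)).prod (isCompact_closedBall (0 : E) L)
    have hcont : ContinuousOn (Function.uncurry u) (Icc s t ×ˢ closedBall 0 L) :=
      hu.contDiffOn.continuousOn.mono (prod_mono hsub (subset_univ _))
    have hmem_closed :
        MemLp (Function.uncurry u) 2 (volume.restrict (Icc s t ×ˢ closedBall (0 : E) L)) :=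
      (memLp_two_iff_integrable_sq (hcont.aestronglyMeasurable hK.measurableSet)).2
        ((hcont.pow 2).integrableOn_compact hK)
    rw [Measure.prod_restrict]
    exact hmem_closed.mono_measure
      (Measure.restrict_mono (Set.prod_mono Ioo_subset_Icc_self ball_subset_closedBall) le_rfl)
  have : IsFiniteMeasure (volume.restrict (ball (0 : E) L)) :=
    isFiniteMeasure_restrict.2 measure_ball_lt_top.ne
  rw [hu.integral_mul_heatKernel_mul_sub hI hχ.contDiff hχ.hasCompactSupport y hst.le htτ hsub]
  simp only [hball]
  refine (abs_integral_integral_mul_le hmem ?_ hB₀).trans_eq ?_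
  · exact (ae_restrict_mem measurableSet_Ioo).mono hB
  · simp only [measureReal_restrict_apply_univ, Real.volume_real_Ioo_of_le hst.le]

lemma abs_sub_integral_mul_heatKernel_mul_le (hu : IsHeatSolutionOn I u) (hI : IsOpen I)
    {R L D b : ℝ} {χ : E → ℝ} (hχ : IsCutoff R L D χ) {y : E} (hy : ‖y‖ ≤ R) {s t : ℝ}
    (hst : s < t) (hsub : Icc s t ⊆ I) {B : ℝ → ℝ}
    (hB : ∀ τ > t, ∀ r ∈ Ioo s t, ∀ x, |cutoffError χ y (τ - r) x| ≤ B τ)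
    (hBb : Tendsto B (𝓝[>] t) (𝓝 b)) :
    |u t y - ∫ x, u s x * (heatKernel (t - s) (x - y) * χ x)| ≤
      b * (√(∫ r in Ioo s t, ∫ x in ball 0 L, u r x ^ 2) *
        √((t - s) * volume.real (ball (0 : E) L))) := by
  have hcont {r : ℝ} (hr : r ∈ Icc s t) : Continuous fun x ↦ u r x * χ x :=
    (hu.contDiff (hsub hr)).continuous.mul hχ.contDiff.continuous
  have hint {r : ℝ} (hr : r ∈ Icc s t) : Integrable fun x ↦ u r x * χ x :=
    (hcont hr).integrable_of_hasCompactSupport hχ.hasCompactSupport.mul_left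
  have hs : s ∈ Icc s t := left_mem_Icc.2 hst.le
  have ht : t ∈ Icc s t := right_mem_Icc.2 hst.le
  have hχy : χ y = 1 := hχ.eqOn_one (mem_closedBall_zero_iff.2 hy)
  have hsub_t : Tendsto (fun τ ↦ τ - t) (𝓝[>] t) (𝓝[>] 0) := by
    refine tendsto_nhdsWithin_iff.2 ⟨?_, ?_⟩
    · exact ((continuous_sub_right t).tendsto' t 0 (sub_self t)).mono_left nhdsWithin_le_nhds
    · filter_upwards [self_mem_nhdsWithin] with τ hτ using sub_pos.2 (mem_Ioi.1 hτ)
  have hlim_t : Tendsto (fun τ ↦ ∫ x, u t x * χ x * heatKernel (τ - t) (x - y)) (𝓝[>] t)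
      (𝓝 (u t y)) := by
    simpa only [hχy, mul_one, Function.comp_def] using
      (tendsto_integral_mul_heatKernel (y := y) (hint ht) (hcont ht).continuousAt).comp hsub_t
  have hlim_s : Tendsto (fun τ ↦ ∫ x, u s x * χ x * heatKernel (τ - s) (x - y)) (𝓝[>] t)
      (𝓝 (∫ x, u s x * χ x * heatKernel (t - s) (x - y))) :=
    (continuousAt_integral_mul_heatKernel (sub_pos.2 hst) (hint hs) y).tendsto.comp
      ((continuous_sub_right s).continuousAt.tendsto.mono_left nhdsWithin_le_nhds)
  have hmul_comm (r σ : ℝ) (x : E) :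
      u r x * (heatKernel σ (x - y) * χ x) = u r x * χ x * heatKernel σ (x - y) := by ring
  simp only [hmul_comm]
  refine le_of_tendsto_of_tendsto (hlim_t.sub hlim_s).abs (hBb.mul_const _) ?_
  filter_upwards [self_mem_nhdsWithin] with τ hτ
  simpa only [hmul_comm] using
    hu.abs_integral_mul_heatKernel_mul_sub_le hI hχ y hst hτ hsub (hB τ hτ)

end IsHeatSolutionOn

end Representation

section Growth

variable [FiniteDimensional ℝ E] [MeasurableSpace E] [BorelSpace E] {I : Set ℝ} {u : ℝ → E → ℝ}
  {γ : ℝ}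

/-- The Gaussian `L²` size condition of exponent `γ`: on a time interval of length `b - a`, the
`L²` norm of `u` over `(a, b) × B(0, R)` grows at most like `exp (γ R² / (b - a))`. -/
def HasGaussianL2Growth (γ : ℝ) (I : Set ℝ) (u : ℝ → E → ℝ) : Prop :=
  ∀ a ∈ I, ∀ b ∈ I, a < b → ∃ C, ∀ R > 0,
    √(∫ t in Ioo a b, ∫ x in ball 0 R, u t x ^ 2) ≤ C * Real.exp (γ * R ^ 2 / (b - a))

lemma tendsto_rpow_mul_exp_sub_mul_sq_atTop_nhds_zero {a b : ℝ} (hab : a < b) (p Y : ℝ) :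
    Tendsto (fun R ↦ R ^ p * Real.exp (a * R ^ 2 - b * (R - Y) ^ 2)) atTop (𝓝 0) := by
  have hatBot : Tendsto (fun R ↦ R * ((a - b) * R + (2 * b * Y + 1)) + -(b * Y ^ 2)) atTop atBot :=
    tendsto_atBot_add_const_right _ _ <| tendsto_id.atTop_mul_atBot₀ <|
      tendsto_atBot_add_const_right _ _ (tendsto_id.const_mul_atTop_of_neg (sub_neg.2 hab))
  refine squeeze_zero' ?_ ?_ (tendsto_rpow_mul_exp_neg_mul_atTop_nhds_zero p 1 one_pos)
  · filter_upwards [eventually_ge_atTop 0] with R hR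
    positivity
  · filter_upwards [eventually_ge_atTop 0, hatBot.eventually_le_atBot 0] with R hR hle
    gcongr
    linarith

lemma IsCutoff.tendsto_integral_mul {f : E → ℝ} (hf : Integrable f) {L : ℝ → ℝ} {D : ℝ}
    {χ : ℝ → E → ℝ} (hχ : ∀ᶠ R in atTop, IsCutoff R (L R) D (χ R)) :
    Tendsto (fun R ↦ ∫ x, f x * χ R x) atTop (𝓝 (∫ x, f x)) := by
  refine tendsto_integral_filter_of_dominated_convergence (fun x ↦ |f x|) ?_ ?_ hf.abs ?_
  · filter_upwards [hχ] with R hR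
    exact hf.aestronglyMeasurable.mul hR.contDiff.continuous.aestronglyMeasurable
  · filter_upwards [hχ] with R hR
    refine .of_forall fun x ↦ ?_
    rw [Real.norm_eq_abs, abs_mul]
    exact mul_le_of_le_one_right (abs_nonneg _) (hR.abs_le_one x)
  · refine .of_forall fun x ↦ tendsto_const_nhds.congr' ?_
    filter_upwards [hχ, eventually_ge_atTop ‖x‖] with R hR hxR
    rw [hR.eqOn_one (mem_closedBall_zero_iff.2 hxR), Pi.one_apply, mul_one]

lemma sqrt_mul_volume_ball_mul {c l R : ℝ} (hc : 0 ≤ c) (hR : 0 < R) :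
    √(c * volume.real (ball (0 : E) (l * R))) =
      √(c * volume.real (ball (0 : E) l)) * R ^ ((Module.finrank ℝ E : ℝ) / 2) := by
  have hball : volume.real (ball (0 : E) (R * l)) =
      R ^ Module.finrank ℝ E * volume.real (ball (0 : E) l) := by
    rw [measureReal_def, Measure.addHaar_ball_mul_of_pos _ _ hR, ENNReal.toReal_mul,
      ENNReal.toReal_ofReal (by positivity), measureReal_def]
  rw [mul_comm l R, hball, mul_left_comm, mul_comm (R ^ _) (c * _),
    Real.sqrt_mul (by positivity), Real.sqrt_eq_rpow (R ^ _), ← Real.rpow_natCast,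
    ← Real.rpow_mul hR.le, mul_one_div]

namespace IsHeatSolutionOn

lemma exists_abs_sub_integral_mul_heatKernel_mul_le (hu : IsHeatSolutionOn I u) (hI : IsOpen I)
    (hgrowth : HasGaussianL2Growth γ I u) {κ : ℝ} (hκ₀ : 0 ≤ κ) (hκ : κ < 1 / 4) {s t : ℝ}
    (hst : s < t) (hsub : Icc s t ⊆ I) {l : ℝ} (hl : 0 < l) (D : ℝ) :
    ∃ M, ∀ {R y χ}, IsCutoff R (l * R) D χ → ‖y‖ + 1 ≤ R →
      |u t y - ∫ x, u s x * (heatKernel (t - s) (x - y) * χ x)| ≤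
        M * (R ^ ((Module.finrank ℝ E : ℝ) / 2) *
          Real.exp (γ * l ^ 2 / (t - s) * R ^ 2 - κ / (t - s) * (R - ‖y‖) ^ 2)) := by
  obtain ⟨C, hC⟩ :=
    hgrowth s (hsub (left_mem_Icc.2 hst.le)) t (hsub (right_mem_Icc.2 hst.le)) hst
  obtain ⟨M, hM⟩ := exists_abs_cutoffError_le (E := E) hκ₀ hκ
  have hts : 0 < t - s := sub_pos.2 hst
  refine ⟨M * D * C * √((t - s) * volume.real (ball (0 : E) l)), fun {R y χ} hχ hR ↦ ?_⟩
  have hR₀ : 0 < R := by linarith [norm_nonneg y]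
  set B : ℝ → ℝ := fun τ ↦ M * D * Real.exp (-(κ * ((R - ‖y‖) ^ 2 / (τ - s))))
  have hBt : ContinuousAt B t := by
    have : t - s ≠ 0 := hts.ne'
    fun_prop (disch := assumption)
  have hBt₀ : 0 ≤ B t := (abs_nonneg _).trans (hM 0 hχ hR hts le_rfl)
  calc |u t y - ∫ x, u s x * (heatKernel (t - s) (x - y) * χ x)|
      ≤ B t * (√(∫ r in Ioo s t, ∫ x in ball 0 (l * R), u r x ^ 2) *
          √((t - s) * volume.real (ball (0 : E) (l * R)))) :=
        hu.abs_sub_integral_mul_heatKernel_mul_le hI hχ (by linarith) hst hsub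
          (fun τ hτ r hr x ↦ hM x hχ hR (sub_pos.2 (hr.2.trans hτ)) (by linarith [hr.1]))
          (hBt.mono_left nhdsWithin_le_nhds)
    _ ≤ B t * (C * Real.exp (γ * (l * R) ^ 2 / (t - s)) *
          √((t - s) * volume.real (ball (0 : E) (l * R)))) := by
        gcongr
        exact hC _ (by positivity)
    _ = _ := by
        have hexp : Real.exp (γ * l ^ 2 / (t - s) * R ^ 2 - κ / (t - s) * (R - ‖y‖) ^ 2) =
            Real.exp (γ * (l * R) ^ 2 / (t - s)) *
              Real.exp (-(κ * ((R - ‖y‖) ^ 2 / (t - s)))) := by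
          rw [← Real.exp_add]
          ring_nf
        rw [sqrt_mul_volume_ball_mul hts.le hR₀, hexp]
        ring

lemma eq_integral_mul_heatKernel (hu : IsHeatSolutionOn I u) (hI : IsOpen I)
    (hgrowth : HasGaussianL2Growth γ I u) (hγ : γ < 1 / 4) {s t : ℝ} (hst : s < t)
    (hsub : Icc s t ⊆ I) {y : E} (hint : Integrable fun x ↦ u s x * heatKernel (t - s) (x - y)) :
    u t y = ∫ x, u s x * heatKernel (t - s) (x - y) := by
  have hts : 0 < t - s := sub_pos.2 hst
  obtain ⟨κ, hγκ, hκ⟩ : ∃ κ, max γ 0 < κ ∧ κ < 1 / 4 := exists_between (max_lt hγ (by norm_num))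
  obtain ⟨hγκ, hκ₀⟩ := max_lt_iff.1 hγκ
  obtain ⟨l, hlκ, hl⟩ : ∃ l, γ * l ^ 2 < κ ∧ 1 < l :=
    (((by fun_prop : ContinuousAt (fun l : ℝ ↦ γ * l ^ 2) 1).eventually_lt_const
      (by simpa using hγκ)).filter_mono nhdsWithin_le_nhds |>.and
        (self_mem_nhdsWithin (s := Ioi (1 : ℝ)))).exists
  obtain ⟨D, hD⟩ := exists_isCutoff (E := E) hl
  choose! χ hχ using hD
  obtain ⟨M, hM⟩ := hu.exists_abs_sub_integral_mul_heatKernel_mul_le hI hgrowth hκ₀.le hκ hst hsub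
    (one_pos.trans hl) D
  have hlim : Tendsto (fun R ↦ ∫ x, u s x * (heatKernel (t - s) (x - y) * χ R x)) atTop
      (𝓝 (∫ x, u s x * heatKernel (t - s) (x - y))) := by
    simpa only [mul_assoc] using IsCutoff.tendsto_integral_mul (L := fun R ↦ l * R) hint
      ((eventually_ge_atTop 1).mono hχ)
  have herror : Tendsto (fun R ↦ u t y - ∫ x, u s x * (heatKernel (t - s) (x - y) * χ R x)) atTop
      (𝓝 0) := by
    have hbound := (tendsto_rpow_mul_exp_sub_mul_sq_atTop_nhds_zero
      (div_lt_div_of_pos_right hlκ hts) (Module.finrank ℝ E / 2) ‖y‖).const_mul M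
    rw [mul_zero] at hbound
    refine squeeze_zero_norm' ?_ hbound
    filter_upwards [eventually_ge_atTop (‖y‖ + 1)] with R hR
    exact hM (hχ R (by linarith [norm_nonneg y])) hR
  exact sub_eq_zero.1 (tendsto_nhds_unique (hlim.const_sub _) herror)

end IsHeatSolutionOn

end Growth

section Uniqueness

lemma isHeatSolutionOn_of_hasDerivAt_heatLap {n : ℕ} {I : Set ℝ} {u : ℝ → ES n → ℝ}
    (hu : ContDiffOn ℝ 2 (fun p : ℝ × ES n ↦ u p.1 p.2) (I ×ˢ univ))
    (hheat : ∀ r ∈ I, ∀ x, HasDerivAt (fun s ↦ u s x) (heatLap n (u r) x) r) :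
    IsHeatSolutionOn I u where
  contDiffOn := hu
  hasDerivAt r hr x := heatLap_eq_laplacian (contDiff_slice hu hr).contDiffAt ▸ hheat r hr x

variable [FiniteDimensional ℝ E] [MeasurableSpace E] [BorelSpace E]

theorem heat_uniqueness_general {ι : Type*} {l : Filter ι} [l.NeBot] {I : Set ℝ} (hI : IsOpen I)
    (hIc : I.OrdConnected) {u : ℝ → E → ℝ} (hu : IsHeatSolutionOn I u) {γ : ℝ} (hγ : γ < 1 / 4)
    (hgrowth : HasGaussianL2Growth γ I u) {τ : ι → ℝ} {a : ℝ} (hτI : ∀ᶠ i in l, τ i ∈ I)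
    (hτ : Tendsto τ l (𝓝 a))
    (hinit : ∀ σ > 0, ∀ y, (∀ᶠ i in l, Integrable fun x ↦ u (τ i) x * heatKernel σ (x - y)) ∧
      Tendsto (fun i ↦ ∫ x, u (τ i) x * heatKernel σ (x - y)) l (𝓝 0))
    {t : ℝ} (ht : t ∈ I) (hat : a < t) (y : E) : u t y = 0 := by
  have hσ : 0 < t - a := sub_pos.2 hat
  obtain ⟨hint, hlim⟩ := hinit (t - a) hσ y
  have hshift : Tendsto (fun i ↦ τ i + (t - a)) l (𝓝 t) := by
    simpa only [add_sub_cancel] using hτ.add_const (t - a)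
  have hrepr : ∀ᶠ i in l,
      u (τ i + (t - a)) y = ∫ x, u (τ i) x * heatKernel (t - a) (x - y) := by
    filter_upwards [hτI, hshift.eventually (hI.mem_nhds ht), hint] with i hi hi' hinti
    have hrepr_i := hu.eq_integral_mul_heatKernel hI hgrowth hγ (lt_add_of_pos_right (τ i) hσ)
      (hIc.out hi hi') (y := y)
    simp only [add_sub_cancel_left] at hrepr_i
    exact hrepr_i hinti
  exact tendsto_nhds_unique ((hu.hasDerivAt t ht y).continuousAt.tendsto.comp hshift)
    (hlim.congr' (hrepr.mono fun _ hi ↦ hi.symm))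

end Uniqueness

/-- **Uniqueness for the heat equation.**
If `u` is a smooth solution of the heat equation on `(0,T) × ℝⁿ` satisfying the local `L²`
size condition with Gaussian-type growth `γ < 1/4`, and there is a sequence `tₖ → 0` with
`u(tₖ) → 0` in `𝒮'(ℝⁿ)` (i.e. `∫ u(tₖ)φ → 0` for every Schwartz `φ`), then `u = 0`. -/
theorem heat_uniqueness
    (n : ℕ) (T : ℝ≥0∞) (hT : 0 < T) (γ : ℝ) (hγ : γ ∈ Set.Ioo (0 : ℝ) (1/4))
    (u : ℝ → ES n → ℝ)
    (hu_smooth : ContDiffOn ℝ (⊤ : ℕ∞) (fun p : ℝ × ES n => u p.1 p.2)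
      {p : ℝ × ES n | 0 < p.1 ∧ ENNReal.ofReal p.1 < T})
    (hu_heat : ∀ (t : ℝ) (x : ES n), 0 < t → ENNReal.ofReal t < T →
      HasDerivAt (fun τ => u τ x) (heatLap n (u t) x) t)
    -- Size condition
    (hsize : ∀ a b : ℝ, 0 < a → a < b → ENNReal.ofReal b < T → ∃ C > 0, ∀ R > 0,
      Real.sqrt (∫ t in Set.Ioo a b, ∫ x in Metric.ball (0 : ES n) R, (u t x) ^ 2) ≤
        C * Real.exp (γ * R ^ 2 / (b - a)))
    -- u(tₖ) → 0 in 𝒮'(ℝⁿ)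
    (hinit : ∃ tk : ℕ → ℝ, (∀ k, 0 < tk k ∧ ENNReal.ofReal (tk k) < T) ∧
      Tendsto tk atTop (nhds 0) ∧
      ∀ φ : SchwartzMap (ES n) ℝ,
        (∀ k, Integrable (fun x => u (tk k) x * φ x)) ∧
        Tendsto (fun k => ∫ x, u (tk k) x * φ x) atTop (nhds 0)) :
    ∀ (t : ℝ) (x : ES n), 0 < t → ENNReal.ofReal t < T → u t x = 0 := by
  obtain ⟨tk, htk, htk_zero, hφ⟩ := hinit
  intro t x ht htT
  set I : Set ℝ := Ioi 0 ∩ ENNReal.ofReal ⁻¹' Iio T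
  have hI : IsOpen I := isOpen_Ioi.inter (isOpen_Iio.preimage ENNReal.continuous_ofReal)
  have hIc : I.OrdConnected :=
    ordConnected_Ioi.inter (ordConnected_Iio.preimage_mono ENNReal.ofReal_mono)
  have hu : IsHeatSolutionOn I u := isHeatSolutionOn_of_hasDerivAt_heatLap
    ((contDiffOn_infty.1 hu_smooth 2).mono fun p hp ↦ hp.1)
    fun r hr x ↦ hu_heat r x hr.1 hr.2
  have hgrowth : HasGaussianL2Growth γ I u := fun a ha b hb hab ↦
    (hsize a b ha.1 hab hb.2).imp fun _ hC ↦ hC.2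
  refine heat_uniqueness_general hI hIc hu hγ.2 hgrowth (.of_forall htk) htk_zero
    (fun σ hσ y ↦ ?_) ⟨ht, htT⟩ ht x
  obtain ⟨φ, hφ_eq⟩ := exists_schwartzMap_eq_heatKernel hσ y
  simpa only [hφ_eq] using (hφ φ).imp_left Eventually.of_forall

end
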